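/- Assume the cost c : 𝒳 → ℝ has linear growth and ℳ(μ̌) ≠ ∅. If c is lower semi-continuous, then the map ℝ₊ ∋ ε ↦ P̲_ε(μ̌) ∈ ℝ is non-increasing, continuous and convex. -/

import Mathlib

open MeasureTheory Filter

namespace MMOT

/-- Path space `𝒳 = (ℝ^d)^T`. -/
abbrev Path (T d : ℕ) := Fin T → Fin d → ℝ

/-- σ-algebra generated by the coordinates `X_0, …, X_t` (0-indexed). -/
noncomputable def pastSigma (T d : ℕ) (t : ℕ) : MeasurableSpace (Path T d) :=
  ⨆ s : Fin T, ⨆ _ : (s : ℕ) ≤ t, MeasurableSpace.comap (fun x => x s) inferInstance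

def HasMarginals {T d : ℕ} (π : Measure (Path T d)) (μ : Fin T → Fin d → Measure ℝ) : Prop :=
  ∀ t i, π.map (fun x => x t i) = μ t i

/-- `E_π[X_{t+1,i} | X_0,…,X_t]`. -/
noncomputable def condNext {T d : ℕ} (π : Measure (Path T d)) (t : ℕ) (ht : t + 1 < T)
    (i : Fin d) : Path T d → ℝ :=
  π[fun x => x ⟨t + 1, ht⟩ i | pastSigma T d t]

def IsMartingaleMeasure {T d : ℕ} (π : Measure (Path T d)) : Prop :=
  ∀ (t : ℕ) (ht : t + 1 < T) (i : Fin d),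
    condNext π t ht i =ᵐ[π] fun x => x ⟨t, Nat.lt_of_succ_lt ht⟩ i

/-- The set `ℳ(μ̌)` of calibrated martingale measures. -/
def MartSet {T d : ℕ} (μ : Fin T → Fin d → Measure ℝ) : Set (Measure (Path T d)) :=
  {π | IsProbabilityMeasure π ∧ HasMarginals π μ ∧ IsMartingaleMeasure π}

/-- The relaxed set `ℳ_ε(μ̌)`: calibrated measures whose martingale defect is at most `ε`. -/
def MartSetEps {T d : ℕ} (μ : Fin T → Fin d → Measure ℝ) (ε : ℝ) :
    Set (Measure (Path T d)) :=
  {π | IsProbabilityMeasure π ∧ HasMarginals π μ ∧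
    ∀ (t : ℕ) (ht : t + 1 < T),
      ∫ x, ∑ i, |condNext π t ht i x - x ⟨t, Nat.lt_of_succ_lt ht⟩ i| ∂π ≤ ε}

def primalVals {T d : ℕ} (c : Path T d → ℝ) (S : Set (Measure (Path T d))) : Set ℝ :=
  {r | ∃ π ∈ S, Integrable c π ∧ r = ∫ x, c x ∂π}

noncomputable def PbarEps {T d : ℕ} (μ : Fin T → Fin d → Measure ℝ) (c : Path T d → ℝ)
    (ε : ℝ) : ℝ :=
  sSup (primalVals c (MartSetEps μ ε))

noncomputable def PlowEps {T d : ℕ} (μ : Fin T → Fin d → Measure ℝ) (c : Path T d → ℝ)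
    (ε : ℝ) : ℝ :=
  sInf (primalVals c (MartSetEps μ ε))


open Topology BoundedContinuousFunction

noncomputable def absSum {T d : ℕ} (x : Path T d) : ℝ := ∑ t, ∑ i, |x t i|

lemma absSum_nonneg {T d : ℕ} (x : Path T d) : 0 ≤ absSum x := by
  unfold absSum; positivity

lemma continuous_absSum {T d : ℕ} : Continuous (absSum (T := T) (d := d)) := by
  unfold absSum; fun_prop

lemma abs_le_absSum {T d : ℕ} (x : Path T d) (t : Fin T) (i : Fin d) : |x t i| ≤ absSum x := by
  unfold absSum
  have h1 : |x t i| ≤ ∑ i, |x t i| :=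
    Finset.single_le_sum (f := fun i => |x t i|) (fun _ _ => abs_nonneg _) (Finset.mem_univ i)
  have h2 : ∑ i, |x t i| ≤ ∑ t, ∑ i, |x t i| :=
    Finset.single_le_sum (f := fun t => ∑ i, |x t i|)
      (fun _ _ => Finset.sum_nonneg fun _ _ => abs_nonneg _) (Finset.mem_univ t)
  exact h1.trans h2

lemma norm_le_absSum {T d : ℕ} (x : Path T d) : ‖x‖ ≤ absSum x := by
  rw [pi_norm_le_iff_of_nonneg (absSum_nonneg x)]
  intro t
  rw [pi_norm_le_iff_of_nonneg (absSum_nonneg x)]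
  intro i
  exact abs_le_absSum x t i

lemma measurable_coord {T d : ℕ} (t : Fin T) (i : Fin d) :
    Measurable (fun x : Path T d => x t i) := by fun_prop

lemma integrable_coord {T d : ℕ} {μ : Fin T → Fin d → Measure ℝ}
    (hmom : ∀ t i, Integrable (fun y : ℝ => y) (μ t i))
    {π : Measure (Path T d)} (hπ : HasMarginals π μ) (t : Fin T) (i : Fin d) :
    Integrable (fun x : Path T d => x t i) π := by
  have h := hmom t i
  rw [← hπ t i] at h
  exact h.comp_measurable (measurable_coord t i)

lemma integrable_absSum {T d : ℕ} {μ : Fin T → Fin d → Measure ℝ}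
    (hmom : ∀ t i, Integrable (fun y : ℝ => y) (μ t i))
    {π : Measure (Path T d)} (hπ : HasMarginals π μ) :
    Integrable (absSum (T := T) (d := d)) π := by
  unfold absSum
  exact integrable_finsetSum _ fun t _ => integrable_finsetSum _ fun i _ =>
    (integrable_coord hmom hπ t i).abs

lemma integral_absSum {T d : ℕ} {μ : Fin T → Fin d → Measure ℝ}
    (hmom : ∀ t i, Integrable (fun y : ℝ => y) (μ t i))
    {π : Measure (Path T d)} (hπ : HasMarginals π μ) :
    ∫ x, absSum x ∂π = ∑ t, ∑ i, ∫ y, |y| ∂(μ t i) := by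
  unfold absSum
  rw [integral_finsetSum _ fun t _ => integrable_finsetSum _ fun i _ =>
    (integrable_coord hmom hπ t i).abs]
  refine Finset.sum_congr rfl fun t _ => ?_
  rw [integral_finsetSum _ fun i _ => (integrable_coord hmom hπ t i).abs]
  refine Finset.sum_congr rfl fun i _ => ?_
  rw [← hπ t i, integral_map (measurable_coord t i).aemeasurable (by fun_prop)]

lemma integrable_of_growth {T d : ℕ} {μ : Fin T → Fin d → Measure ℝ}
    (hmom : ∀ t i, Integrable (fun y : ℝ => y) (μ t i))
    {π : Measure (Path T d)} [IsProbabilityMeasure π] (hπ : HasMarginals π μ)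
    {c : Path T d → ℝ} (hc : Measurable c) {K : ℝ} (hK : ∀ x, |c x| ≤ K * (1 + absSum x)) :
    Integrable c π := by
  refine Integrable.mono' (g := fun x => K * (1 + absSum x)) ?_ hc.aestronglyMeasurable
    (ae_of_all _ hK)
  exact ((integrable_const 1).add (integrable_absSum hmom hπ)).const_mul K

lemma integral_growth {T d : ℕ} {μ : Fin T → Fin d → Measure ℝ}
    (hmom : ∀ t i, Integrable (fun y : ℝ => y) (μ t i))
    {π : Measure (Path T d)} [IsProbabilityMeasure π] (hπ : HasMarginals π μ) (K : ℝ) :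
    ∫ x, K * (1 + absSum x) ∂π = K * (1 + ∑ t, ∑ i, ∫ y, |y| ∂(μ t i)) := by
  rw [integral_const_mul, integral_add (integrable_const 1) (integrable_absSum hmom hπ),
    integral_absSum hmom hπ]
  simp

/-- Lower semicontinuity of the cost functional. -/
lemma integral_le_of_tendsto {T d : ℕ} {μ : Fin T → Fin d → Measure ℝ}
    (hmom : ∀ t i, Integrable (fun y : ℝ => y) (μ t i))
    {p : ℕ → ProbabilityMeasure (Path T d)} {q : ProbabilityMeasure (Path T d)}
    (hp : ∀ n, HasMarginals (p n : Measure (Path T d)) μ)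
    (hq : HasMarginals (q : Measure (Path T d)) μ)
    (hpq : Tendsto p atTop (𝓝 q))
    {f : Path T d → ℝ} (hf : LowerSemicontinuous f) {K : ℝ}
    (hK : ∀ x, |f x| ≤ K * (1 + absSum x))
    {a : ℕ → ℝ} {b : ℝ} (ha : ∀ n, ∫ x, f x ∂(p n : Measure (Path T d)) ≤ a n)
    (hab : Tendsto a atTop (𝓝 b)) :
    ∫ x, f x ∂(q : Measure (Path T d)) ≤ b := by
  set M := K * (1 + ∑ t, ∑ i, ∫ y, |y| ∂(μ t i)) with hM
  set g : Path T d → ℝ := fun x => f x + K * (1 + absSum x) with hg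
  have hg0 : ∀ x, 0 ≤ g x := fun x => by have := (abs_le.1 (hK x)).1; simp only [hg]; linarith
  have hglsc : LowerSemicontinuous g :=
    hf.add (Continuous.lowerSemicontinuous (by have := continuous_absSum (T := T) (d := d); fun_prop))
  have hgm : Measurable g := hglsc.measurable
  have hgi : ∀ (r : ProbabilityMeasure (Path T d)), HasMarginals (r : Measure (Path T d)) μ →
      Integrable g r ∧ ∫ x, g x ∂(r : Measure (Path T d)) = ∫ x, f x ∂(r : Measure (Path T d)) + M := by
    intro r hr
    have h1 := integrable_of_growth hmom hr hf.measurable hK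
    have h2 : Integrable (fun x => K * (1 + absSum x)) (r : Measure (Path T d)) :=
      ((integrable_const 1).add (integrable_absSum hmom hr)).const_mul K
    refine ⟨h1.add h2, ?_⟩
    rw [hM, ← integral_growth hmom hr K, ← integral_add h1 h2]
  have key : ∫⁻ x, ENNReal.ofReal (g x) ∂(q : Measure (Path T d)) ≤
      liminf (fun n => ∫⁻ x, ENNReal.ofReal (g x) ∂(p n : Measure (Path T d))) atTop := by
    simp_rw [lintegral_eq_lintegral_meas_lt _ (ae_of_all _ hg0) hgm.aemeasurable]
    calc _ ≤ ∫⁻ t in Set.Ioi (0 : ℝ), liminf (fun n => (p n : Measure (Path T d)) {x | t < g x}) atTop := by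
            refine lintegral_mono fun t => ?_
            exact ProbabilityMeasure.le_liminf_measure_open_of_tendsto hpq
              (hglsc.isOpen_preimage t)
      _ ≤ _ := by
            refine lintegral_liminf_le fun n => ?_
            exact Antitone.measurable fun s t hst => measure_mono fun x hx => lt_of_le_of_lt hst hx
  have hpn : ∀ n, ∫⁻ x, ENNReal.ofReal (g x) ∂(p n : Measure (Path T d)) ≤ ENNReal.ofReal (a n + M) := by
    intro n
    rw [← ofReal_integral_eq_lintegral_ofReal (hgi _ (hp n)).1 (ae_of_all _ hg0), (hgi _ (hp n)).2]
    exact ENNReal.ofReal_le_ofReal (by linarith [ha n])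
  have hlim : Tendsto (fun n => ENNReal.ofReal (a n + M)) atTop (𝓝 (ENNReal.ofReal (b + M))) :=
    ENNReal.tendsto_ofReal (hab.add_const M)
  have hb0 : 0 ≤ b + M := by
    refine ge_of_tendsto' (hab.add_const M) fun n => ?_
    have := integral_nonneg (μ := (p n : Measure (Path T d))) (f := g) (fun x => hg0 x)
    rw [(hgi _ (hp n)).2] at this
    linarith [ha n]
  have h3 : ∫⁻ x, ENNReal.ofReal (g x) ∂(q : Measure (Path T d)) ≤ ENNReal.ofReal (b + M) := by
    refine key.trans ?_
    rw [← hlim.liminf_eq]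
    exact liminf_le_liminf (Eventually.of_forall hpn)
  rw [← ofReal_integral_eq_lintegral_ofReal (hgi _ hq).1 (ae_of_all _ hg0), (hgi _ hq).2,
    ENNReal.ofReal_le_ofReal_iff hb0] at h3
  linarith

lemma exists_subseq {T d : ℕ} {μ : Fin T → Fin d → Measure ℝ}
    (hmom : ∀ t i, Integrable (fun y : ℝ => y) (μ t i))
    {p : ℕ → ProbabilityMeasure (Path T d)}
    (hp : ∀ n, HasMarginals (p n : Measure (Path T d)) μ) :
    ∃ q : ProbabilityMeasure (Path T d), ∃ φ : ℕ → ℕ, StrictMono φ ∧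
      Tendsto (p ∘ φ) atTop (𝓝 q) ∧ HasMarginals (q : Measure (Path T d)) μ := by
  set M : ℝ := ∑ t, ∑ i, ∫ y, |y| ∂(μ t i) with hM
  let u : ℕ → NNReal := fun n => (M / ((n : ℝ) + 1)).toNNReal
  have hu : Tendsto u atTop (𝓝 0) := by
    have h : Tendsto (fun n : ℕ => M / ((n : ℝ) + 1)) atTop (𝓝 0) := by
      have := (tendsto_one_div_add_atTop_nhds_zero_nat (𝕜 := ℝ)).const_mul M
      simpa [div_eq_mul_inv] using this
    have := tendsto_real_toNNReal h
    simpa using this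
  have hcomp := isCompact_setOfPred_probabilityMeasure_mass_eq_compl_isCompact_le (E := Path T d)
    (K := fun n : ℕ => Metric.closedBall 0 ((n : ℝ) + 1)) hu
    (fun n => isCompact_closedBall _ _) (Or.inl inferInstance)
  obtain ⟨q, -, φ, hφ, hlim⟩ := hcomp.isSeqCompact (x := p) (fun m n => by
    have hmk := mul_meas_ge_le_integral_of_nonneg (μ := (p m : Measure (Path T d)))
      (ae_of_all _ absSum_nonneg) (integrable_absSum hmom (hp m)) ((n : ℝ) + 1)
    rw [integral_absSum hmom (hp m), ← hM] at hmk
    have hn : (0 : ℝ) < (n : ℝ) + 1 := by positivity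
    have hsub : (p m : Measure (Path T d)).real (Metric.closedBall 0 ((n : ℝ) + 1))ᶜ ≤
        (p m : Measure (Path T d)).real {x | (n : ℝ) + 1 ≤ absSum x} := by
      refine measureReal_mono (fun x hx => ?_)
      simp only [Set.mem_compl_iff, Metric.mem_closedBall, dist_zero_right, not_le] at hx
      exact hx.le.trans (norm_le_absSum x)
    have : (p m : Measure (Path T d)).real (Metric.closedBall 0 ((n : ℝ) + 1))ᶜ ≤ M / ((n : ℝ) + 1) := by
      refine hsub.trans ?_
      rw [le_div_iff₀ hn, mul_comm]
      exact hmk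
    exact NNReal.le_toNNReal_of_coe_le this)
  refine ⟨q, φ, hφ, hlim, fun t i => ?_⟩
  have hc : Continuous (fun x : Path T d => x t i) := by fun_prop
  have h1 := ProbabilityMeasure.tendsto_map_of_tendsto_of_continuous _ _ hlim hc
  have h2 : ∀ n, ((p ∘ φ) n).map hc.measurable.aemeasurable =
      ((p 0).map hc.measurable.aemeasurable) := by
    intro n
    apply Subtype.ext
    exact (hp (φ n) t i).trans (hp 0 t i).symm
  simp_rw [h2] at h1
  have h3 := tendsto_nhds_unique h1 tendsto_const_nhds
  have h4 := congrArg (fun r : ProbabilityMeasure ℝ => (r : Measure ℝ)) h3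
  exact Eq.trans h4 (hp 0 t i)

lemma pastSigma_le (T d t : ℕ) : pastSigma T d t ≤ (inferInstance : MeasurableSpace (Path T d)) := by
  refine iSup_le fun s => iSup_le fun _ => ?_
  exact (measurable_pi_apply s).comap_le

lemma measurable_past {T d t : ℕ} {s : Fin T} (hs : (s : ℕ) ≤ t) (i : Fin d) :
    Measurable[pastSigma T d t] (fun x : Path T d => x s i) := by
  have h : Measurable[pastSigma T d t] (fun x : Path T d => x s) := by
    rw [measurable_iff_comap_le]
    exact le_iSup_of_le s (le_iSup_of_le hs le_rfl)
  exact (measurable_pi_apply i).comp h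

/-- Restriction to the past. -/
def rest (T d t : ℕ) (x : Path T d) : {s : Fin T // (s : ℕ) ≤ t} → Fin d → ℝ := fun s => x s

lemma continuous_rest (T d t : ℕ) : Continuous (rest T d t) := by
  unfold rest; fun_prop

lemma measurable_rest_past (T d t : ℕ) : Measurable[pastSigma T d t] (rest T d t) := by
  refine @measurable_pi_lambda _ _ _ (pastSigma T d t) _ _ fun s => ?_
  refine @measurable_pi_lambda _ _ _ (pastSigma T d t) _ _ fun i => ?_
  exact measurable_past s.2 i

lemma pastSigma_le_comap (T d t : ℕ) :
    pastSigma T d t ≤ MeasurableSpace.comap (rest T d t) inferInstance := by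
  refine iSup_le fun s => iSup_le fun hs => ?_
  have : (fun x : Path T d => x s) = (fun y => y ⟨s, hs⟩) ∘ rest T d t := rfl
  rw [this, ← MeasurableSpace.comap_comp]
  exact MeasurableSpace.comap_mono (measurable_pi_apply _).comap_le

lemma integral_pull {T d : ℕ} {μ : Fin T → Fin d → Measure ℝ}
    (hmom : ∀ t i, Integrable (fun y : ℝ => y) (μ t i))
    {π : Measure (Path T d)} [IsProbabilityMeasure π] (hπ : HasMarginals π μ)
    (t : ℕ) (ht : t + 1 < T) (i : Fin d) {h : Path T d → ℝ}
    (hm : Measurable[pastSigma T d t] h) (hb : ∀ x, |h x| ≤ 1) :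
    ∫ x, h x * (condNext π t ht i x - x ⟨t, Nat.lt_of_succ_lt ht⟩ i) ∂π =
      ∫ x, h x * (x ⟨t + 1, ht⟩ i - x ⟨t, Nat.lt_of_succ_lt ht⟩ i) ∂π := by
  have hm' : Measurable h := hm.mono (pastSigma_le T d t) le_rfl
  have hI : ∀ {g : Path T d → ℝ}, Integrable g π → Integrable (fun x => h x * g x) π := fun hg =>
    hg.bdd_mul hm'.aestronglyMeasurable (c := 1) (ae_of_all _ hb)
  have i1 := integrable_coord hmom hπ ⟨t + 1, ht⟩ i
  have i0 := integrable_coord hmom hπ ⟨t, Nat.lt_of_succ_lt ht⟩ i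
  have ic : Integrable (condNext π t ht i) π := integrable_condExp
  simp_rw [mul_sub]
  rw [integral_sub (hI ic) (hI i0), integral_sub (hI i1) (hI i0)]
  congr 1
  have h1 := condExp_stronglyMeasurable_mul_of_bound (pastSigma_le T d t) hm.stronglyMeasurable i1 1
    (ae_of_all _ hb)
  rw [← integral_condExp (pastSigma_le T d t) (f := fun x => h x * x ⟨t + 1, ht⟩ i)]
  exact (integral_congr_ae h1).symm

lemma integral_test_le {T d : ℕ} {μ : Fin T → Fin d → Measure ℝ}
    (hmom : ∀ t i, Integrable (fun y : ℝ => y) (μ t i))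
    {π : Measure (Path T d)} [IsProbabilityMeasure π] (hπ : HasMarginals π μ)
    (t : ℕ) (ht : t + 1 < T) (i : Fin d) {h : Path T d → ℝ}
    (hm : Measurable[pastSigma T d t] h) (hb : ∀ x, |h x| ≤ 1) :
    ∫ x, h x * (x ⟨t + 1, ht⟩ i - x ⟨t, Nat.lt_of_succ_lt ht⟩ i) ∂π ≤
      ∫ x, |condNext π t ht i x - x ⟨t, Nat.lt_of_succ_lt ht⟩ i| ∂π := by
  rw [← integral_pull hmom hπ t ht i hm hb]
  have hm' : Measurable h := hm.mono (pastSigma_le T d t) le_rfl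
  have i0 := integrable_coord hmom hπ ⟨t, Nat.lt_of_succ_lt ht⟩ i
  have ic : Integrable (condNext π t ht i) π := integrable_condExp
  refine integral_mono ((ic.sub i0).bdd_mul hm'.aestronglyMeasurable (c := 1) (ae_of_all _ hb))
    (ic.sub i0).abs fun x => ?_
  refine (le_abs_self _).trans ?_
  simp only [abs_mul, Pi.sub_apply]
  exact mul_le_of_le_one_left (abs_nonneg _) (hb x)

lemma exists_test {T d : ℕ} {μ : Fin T → Fin d → Measure ℝ}
    (hmom : ∀ t i, Integrable (fun y : ℝ => y) (μ t i))
    {π : Measure (Path T d)} [IsProbabilityMeasure π] (hπ : HasMarginals π μ)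
    (t : ℕ) (ht : t + 1 < T) (i : Fin d) :
    ∃ h : Path T d → ℝ, Measurable[pastSigma T d t] h ∧ (∀ x, |h x| ≤ 1) ∧
      ∫ x, |condNext π t ht i x - x ⟨t, Nat.lt_of_succ_lt ht⟩ i| ∂π =
        ∫ x, h x * (x ⟨t + 1, ht⟩ i - x ⟨t, Nat.lt_of_succ_lt ht⟩ i) ∂π := by
  have hz : Measurable[pastSigma T d t]
      (fun x => condNext π t ht i x - x ⟨t, Nat.lt_of_succ_lt ht⟩ i) :=
    Measurable.sub (stronglyMeasurable_condExp.measurable) (measurable_past le_rfl i)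
  let s : ℝ → ℝ := fun z => if 0 ≤ z then 1 else -1
  have hs : Measurable s := Measurable.ite measurableSet_Ici measurable_const measurable_const
  have hs1 : ∀ z, |s z| ≤ 1 := fun z => by simp only [s]; split_ifs <;> simp
  have hsz : ∀ z, s z * z = |z| := fun z => by
    simp only [s]; split_ifs with h
    · rw [abs_of_nonneg h, one_mul]
    · rw [abs_of_neg (not_le.1 h)]; ring
  refine ⟨fun x => s (condNext π t ht i x - x ⟨t, Nat.lt_of_succ_lt ht⟩ i), hs.comp hz,
    fun x => hs1 _, ?_⟩
  refine Eq.trans ?_ (integral_pull hmom hπ t ht i (hs.comp hz) (fun x => hs1 _))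
  simp only [Function.comp_apply, hsz]

lemma integral_defect {T d : ℕ} {μ : Fin T → Fin d → Measure ℝ}
    (hmom : ∀ t i, Integrable (fun y : ℝ => y) (μ t i))
    {π : Measure (Path T d)} (hπ : HasMarginals π μ) (t : ℕ) (ht : t + 1 < T) :
    ∫ x, ∑ i, |condNext π t ht i x - x ⟨t, Nat.lt_of_succ_lt ht⟩ i| ∂π =
      ∑ i, ∫ x, |condNext π t ht i x - x ⟨t, Nat.lt_of_succ_lt ht⟩ i| ∂π := by
  refine integral_finsetSum _ fun i _ => ?_
  have ic : Integrable (condNext π t ht i) π := integrable_condExp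
  exact (ic.sub (integrable_coord hmom hπ _ i)).abs

lemma mix_mem {T d : ℕ} {μ : Fin T → Fin d → Measure ℝ}
    (hprob : ∀ t i, IsProbabilityMeasure (μ t i))
    (hmom : ∀ t i, Integrable (fun y : ℝ => y) (μ t i))
    {π₁ π₂ : Measure (Path T d)} {e₁ e₂ : ℝ} (h₁ : π₁ ∈ MartSetEps μ e₁) (h₂ : π₂ ∈ MartSetEps μ e₂)
    {a b : ℝ} (ha : 0 ≤ a) (hb : 0 ≤ b) (hab : a + b = 1) :
    ENNReal.ofReal a • π₁ + ENNReal.ofReal b • π₂ ∈ MartSetEps μ (a * e₁ + b * e₂) := by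
  obtain ⟨p₁, m₁, d₁⟩ := h₁
  obtain ⟨p₂, m₂, d₂⟩ := h₂
  have hE : ENNReal.ofReal a + ENNReal.ofReal b = 1 := by
    rw [← ENNReal.ofReal_add ha hb, hab, ENNReal.ofReal_one]
  have hP : IsProbabilityMeasure (ENNReal.ofReal a • π₁ + ENNReal.ofReal b • π₂) :=
    ⟨by simp [hE]⟩
  have hM : HasMarginals (ENNReal.ofReal a • π₁ + ENNReal.ofReal b • π₂) μ := by
    intro t i
    rw [Measure.map_add _ _ (measurable_coord t i), Measure.map_smul, Measure.map_smul, m₁ t i,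
      m₂ t i, ← add_smul, hE, one_smul]
  refine ⟨hP, hM, fun t ht => ?_⟩
  have D₁ := d₁ t ht
  have D₂ := d₂ t ht
  rw [integral_defect hmom m₁] at D₁
  rw [integral_defect hmom m₂] at D₂
  rw [integral_defect hmom hM]
  refine le_trans ?_ (add_le_add (mul_le_mul_of_nonneg_left D₁ ha) (mul_le_mul_of_nonneg_left D₂ hb))
  rw [Finset.mul_sum, Finset.mul_sum, ← Finset.sum_add_distrib]
  refine Finset.sum_le_sum fun i _ => ?_
  obtain ⟨h, hm, hb1, heq⟩ := exists_test hmom hM t ht i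
  rw [heq]
  have hm' : Measurable h := hm.mono (pastSigma_le T d t) le_rfl
  have hI : ∀ {π : Measure (Path T d)}, HasMarginals π μ → Integrable (fun x => h x *
      (x ⟨t + 1, ht⟩ i - x ⟨t, Nat.lt_of_succ_lt ht⟩ i)) π := fun hπ =>
    ((integrable_coord hmom hπ _ i).sub (integrable_coord hmom hπ _ i)).bdd_mul
      hm'.aestronglyMeasurable (c := 1) (ae_of_all _ hb1)
  rw [integral_add_measure ((hI m₁).smul_measure ENNReal.ofReal_ne_top)
    ((hI m₂).smul_measure ENNReal.ofReal_ne_top), integral_smul_measure, integral_smul_measure,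
    ENNReal.toReal_ofReal ha, ENNReal.toReal_ofReal hb, smul_eq_mul, smul_eq_mul]
  exact add_le_add (mul_le_mul_of_nonneg_left (integral_test_le hmom m₁ t ht i hm hb1) ha)
    (mul_le_mul_of_nonneg_left (integral_test_le hmom m₂ t ht i hm hb1) hb)

/-- If all bounded continuous tests of the past vanish, the martingale property holds. -/
lemma condNext_eq_of_test {T d : ℕ} {μ : Fin T → Fin d → Measure ℝ}
    (hmom : ∀ t i, Integrable (fun y : ℝ => y) (μ t i))
    {π : Measure (Path T d)} [IsProbabilityMeasure π] (hπ : HasMarginals π μ)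
    (t : ℕ) (ht : t + 1 < T) (i : Fin d)
    (H : ∀ h : ({s : Fin T // (s : ℕ) ≤ t} → Fin d → ℝ) →ᵇ ℝ,
      ∫ x, h (rest T d t x) * (x ⟨t + 1, ht⟩ i - x ⟨t, Nat.lt_of_succ_lt ht⟩ i) ∂π = 0) :
    condNext π t ht i =ᵐ[π] fun x => x ⟨t, Nat.lt_of_succ_lt ht⟩ i := by
  set X1 : Path T d → ℝ := fun x => x ⟨t + 1, ht⟩ i with hX1
  set X0 : Path T d → ℝ := fun x => x ⟨t, Nat.lt_of_succ_lt ht⟩ i with hX0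
  have i1 : Integrable X1 π := integrable_coord hmom hπ ⟨t + 1, ht⟩ i
  have i0 : Integrable X0 π := integrable_coord hmom hπ ⟨t, Nat.lt_of_succ_lt ht⟩ i
  have mX1 : Measurable X1 := measurable_coord _ i
  have mX0 : Measurable X0 := measurable_coord _ i
  have mr : Measurable (rest T d t) := (continuous_rest T d t).measurable
  set P : Path T d → NNReal := fun x => (X1 x - X0 x).toNNReal with hP
  set N : Path T d → NNReal := fun x => (-(X1 x - X0 x)).toNNReal with hN
  have mP : Measurable P := (mX1.sub mX0).real_toNNReal
  have mN : Measurable N := (mX1.sub mX0).neg.real_toNNReal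
  have iP : Integrable (fun x => (P x : ℝ)) π := (i1.sub i0).real_toNNReal
  have iN : Integrable (fun x => (N x : ℝ)) π := (i1.sub i0).neg.real_toNNReal
  have hPN : ∀ x, (P x : ℝ) - N x = X1 x - X0 x := fun x => by
    simp only [hP, hN, Real.coe_toNNReal']
    exact max_zero_sub_max_neg_zero_eq_self _
  let A : Measure (Path T d) := π.withDensity fun x => (P x : ENNReal)
  let B : Measure (Path T d) := π.withDensity fun x => (N x : ENNReal)
  have fA : IsFiniteMeasure A := isFiniteMeasure_withDensity_ofReal (i1.sub i0).2
  have fB : IsFiniteMeasure B := isFiniteMeasure_withDensity_ofReal (i1.sub i0).neg.2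
  have hAB : A.map (rest T d t) = B.map (rest T d t) := by
    apply ext_of_forall_integral_eq_of_IsFiniteMeasure
    intro f
    rw [integral_map mr.aemeasurable f.continuous.aestronglyMeasurable,
      integral_map mr.aemeasurable f.continuous.aestronglyMeasurable,
      integral_withDensity_eq_integral_smul mP, integral_withDensity_eq_integral_smul mN]
    have hfm : AEStronglyMeasurable (fun x => f (rest T d t x)) π :=
      (f.continuous.comp (continuous_rest T d t)).aestronglyMeasurable
    have hfb : ∀ᵐ x ∂π, ‖f (rest T d t x)‖ ≤ ‖f‖ := ae_of_all _ fun x => f.norm_coe_le_norm _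
    have I1 := iP.bdd_mul hfm hfb
    have I2 := iN.bdd_mul hfm hfb
    have := H f
    rw [← sub_eq_zero]
    simp only [NNReal.smul_def, smul_eq_mul]
    simp_rw [mul_comm _ (f _)]
    rw [← integral_sub I1 I2, ← this]
    refine integral_congr_ae (ae_of_all _ fun x => ?_)
    simp only [← mul_sub, hPN]
    rfl
  symm
  refine ae_eq_condExp_of_forall_setIntegral_eq (pastSigma_le T d t) i1
    (fun s _ _ => i0.integrableOn) (fun s hs _ => ?_)
    (Measurable.stronglyMeasurable (measurable_past le_rfl i)).aestronglyMeasurable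
  obtain ⟨S, hS, rfl⟩ := pastSigma_le_comap T d t s hs
  have hms : MeasurableSet (rest T d t ⁻¹' S) := mr hS
  have e := congrArg (fun m => m S) hAB
  simp only [Measure.map_apply mr hS] at e
  simp only [A, B, withDensity_apply _ hms] at e
  have e1 : ∫ x in rest T d t ⁻¹' S, (P x : ℝ) ∂π = ∫ x in rest T d t ⁻¹' S, (N x : ℝ) ∂π := by
    rw [integral_eq_lintegral_of_nonneg_ae (f := fun x => (P x : ℝ)) (ae_of_all _ fun x => (P x).2) iP.integrableOn.1,
      integral_eq_lintegral_of_nonneg_ae (f := fun x => (N x : ℝ)) (ae_of_all _ fun x => (N x).2) iN.integrableOn.1]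
    simp only [ENNReal.ofReal_coe_nnreal]
    rw [e]
  rw [← sub_eq_zero, ← integral_sub iP.integrableOn iN.integrableOn] at e1
  simp_rw [hPN] at e1
  rw [integral_sub i1.integrableOn i0.integrableOn] at e1
  linarith

lemma limit_mem {T d : ℕ} {μ : Fin T → Fin d → Measure ℝ}
    (hmom : ∀ t i, Integrable (fun y : ℝ => y) (μ t i))
    {p : ℕ → ProbabilityMeasure (Path T d)} {q : ProbabilityMeasure (Path T d)}
    (hq : HasMarginals (q : Measure (Path T d)) μ)
    (hpq : Tendsto p atTop (𝓝 q)) {e : ℕ → ℝ} (he : Tendsto e atTop (𝓝 0))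
    (hp : ∀ n, (p n : Measure (Path T d)) ∈ MartSetEps μ (e n)) :
    (q : Measure (Path T d)) ∈ MartSetEps μ 0 := by
  refine ⟨inferInstance, hq, fun t ht => ?_⟩
  rw [integral_defect hmom hq]
  refine (Finset.sum_eq_zero fun i _ => ?_).le
  have hone : ∀ h : ({s : Fin T // (s : ℕ) ≤ t} → Fin d → ℝ) →ᵇ ℝ, (∀ y, |h y| ≤ 1) →
      ∫ x, h (rest T d t x) * (x ⟨t + 1, ht⟩ i - x ⟨t, Nat.lt_of_succ_lt ht⟩ i)
        ∂(q : Measure (Path T d)) ≤ 0 := by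
    intro h hh
    refine integral_le_of_tendsto hmom (fun n => (hp n).2.1) hq hpq (K := 2)
      (Continuous.lowerSemicontinuous ?_) (fun x => ?_) (a := e) (fun n => ?_) he
    · have := h.continuous.comp (continuous_rest T d t)
      exact this.mul (by fun_prop)
    · rw [abs_mul]
      have h1 := abs_le_absSum x ⟨t + 1, ht⟩ i
      have h2 := abs_le_absSum x ⟨t, Nat.lt_of_succ_lt ht⟩ i
      have h3 := abs_sub (x ⟨t + 1, ht⟩ i) (x ⟨t, Nat.lt_of_succ_lt ht⟩ i)
      have h4 := mul_le_of_le_one_left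
        (abs_nonneg (x ⟨t + 1, ht⟩ i - x ⟨t, Nat.lt_of_succ_lt ht⟩ i)) (hh (rest T d t x))
      linarith
    · refine (integral_test_le hmom (hp n).2.1 t ht i (h := fun x => h (rest T d t x))
        (h.continuous.measurable.comp (measurable_rest_past T d t)) (fun x => hh _)).trans ?_
      have h5 := (hp n).2.2 t ht
      rw [integral_defect hmom (hp n).2.1] at h5
      refine le_trans ?_ h5
      exact Finset.single_le_sum (f := fun i => ∫ x, |condNext (p n : Measure (Path T d)) t ht i x -
        x ⟨t, Nat.lt_of_succ_lt ht⟩ i| ∂(p n : Measure (Path T d)))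
        (fun _ _ => integral_nonneg fun _ => abs_nonneg _) (Finset.mem_univ i)
  have hle : ∀ h : ({s : Fin T // (s : ℕ) ≤ t} → Fin d → ℝ) →ᵇ ℝ,
      ∫ x, h (rest T d t x) * (x ⟨t + 1, ht⟩ i - x ⟨t, Nat.lt_of_succ_lt ht⟩ i)
        ∂(q : Measure (Path T d)) ≤ 0 := by
    intro h
    have hpos : 0 < (‖h‖ + 1)⁻¹ := by positivity
    have := hone ((‖h‖ + 1)⁻¹ • h) (fun y => by
      simp only [BoundedContinuousFunction.coe_smul, smul_eq_mul, abs_mul, abs_of_pos hpos]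
      have := h.norm_coe_le_norm y
      rw [Real.norm_eq_abs] at this
      rw [inv_mul_le_iff₀ (by positivity)]
      linarith)
    simp only [BoundedContinuousFunction.coe_smul, smul_eq_mul, mul_assoc] at this
    rw [integral_const_mul] at this
    by_contra hcon
    push Not at hcon
    have := mul_pos hpos hcon
    linarith
  have := condNext_eq_of_test hmom hq t ht i (fun h => by
    refine le_antisymm (hle h) ?_
    have := hle (-h)
    simp only [BoundedContinuousFunction.coe_neg, Pi.neg_apply, neg_mul, integral_neg] at this
    linarith)
  rw [integral_congr_ae (g := fun _ => (0 : ℝ)), integral_zero]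
  filter_upwards [this] with x hx
  simp [hx]

/-- Proposition: regularity of `ε ↦ P̲_ε(μ̌)`.
If the cost `c` is measurable, of linear growth and lower semi-continuous, and `ℳ(μ̌) ≠ ∅`,
then `ε ↦ P̲_ε(μ̌)` is non-increasing, continuous and convex on `ℝ₊`. -/
theorem plowEps_antitone_continuous_convex {T d : ℕ}
    (μ : Fin T → Fin d → Measure ℝ)
    (hprob : ∀ t i, IsProbabilityMeasure (μ t i))
    (hmom : ∀ t i, Integrable (fun y : ℝ => y) (μ t i))
    (hne : (MartSet μ).Nonempty)
    (c : Path T d → ℝ) (hmeas : Measurable c)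
    (K : ℝ) (hgrowth : ∀ x, |c x| ≤ K * (1 + ∑ t, ∑ i, |x t i|))
    (hlsc : LowerSemicontinuous c) :
    AntitoneOn (fun ε => PlowEps μ c ε) (Set.Ici 0) ∧
    ContinuousOn (fun ε => PlowEps μ c ε) (Set.Ici 0) ∧
    ConvexOn ℝ (Set.Ici 0) (fun ε => PlowEps μ c ε) := by
  have hK : ∀ x, |c x| ≤ K * (1 + absSum x) := hgrowth
  set L := K * (1 + ∑ t, ∑ i, ∫ y, |y| ∂(μ t i)) with hL
  have hint : ∀ e, ∀ π ∈ MartSetEps μ e, Integrable c π := fun e π hπ => by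
    have := hπ.1
    exact integrable_of_growth hmom hπ.2.1 hmeas hK
  have hbdd : ∀ e, BddBelow (primalVals c (MartSetEps μ e)) := by
    intro e
    refine ⟨-L, ?_⟩
    rintro r ⟨π, hπ, hi, rfl⟩
    have := hπ.1
    rw [hL, ← integral_growth hmom hπ.2.1 K, ← integral_neg]
    refine integral_mono ?_ hi fun x => (abs_le.1 (hK x)).1
    exact (((integrable_const 1).add (integrable_absSum hmom hπ.2.1)).const_mul K).neg
  have hmono : ∀ {e e' : ℝ}, e ≤ e' → primalVals c (MartSetEps μ e) ⊆ primalVals c (MartSetEps μ e') := by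
    rintro e e' hee r ⟨π, hπ, hi, rfl⟩
    exact ⟨π, ⟨hπ.1, hπ.2.1, fun t ht => (hπ.2.2 t ht).trans hee⟩, hi, rfl⟩
  have hne0 : (primalVals c (MartSetEps μ 0)).Nonempty := by
    obtain ⟨π, hp, hm, hmart⟩ := hne
    have hmem : π ∈ MartSetEps μ 0 := by
      refine ⟨hp, hm, fun t ht => ?_⟩
      rw [integral_defect hmom hm]
      refine (Finset.sum_eq_zero fun i _ => ?_).le
      rw [integral_congr_ae (g := fun _ => (0 : ℝ)), integral_zero]
      filter_upwards [hmart t ht i] with x hx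
      simp [hx]
    exact ⟨_, π, hmem, hint 0 π hmem, rfl⟩
  have hnee : ∀ e, 0 ≤ e → (primalVals c (MartSetEps μ e)).Nonempty := fun e he =>
    hne0.mono (hmono he)
  have hanti : AntitoneOn (fun ε => PlowEps μ c ε) (Set.Ici 0) := by
    intro e he e' _ hee
    exact csInf_le_csInf (hbdd e') (hnee e he) (hmono hee)
  have hconv : ConvexOn ℝ (Set.Ici 0) (fun ε => PlowEps μ c ε) := by
    refine ⟨convex_Ici 0, ?_⟩
    intro e₁ he₁ e₂ he₂ a b ha hb hab
    refine le_of_forall_pos_le_add fun δ hδ => ?_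
    obtain ⟨_, ⟨π₁, h₁, i₁, rfl⟩, l₁⟩ := Real.lt_sInf_add_pos (hnee e₁ he₁) hδ
    obtain ⟨_, ⟨π₂, h₂, i₂, rfl⟩, l₂⟩ := Real.lt_sInf_add_pos (hnee e₂ he₂) hδ
    have hmix := mix_mem hprob hmom h₁ h₂ ha hb hab
    have hle : PlowEps μ c (a * e₁ + b * e₂) ≤ _ := csInf_le (hbdd _) ⟨_, hmix, hint _ _ hmix, rfl⟩
    rw [integral_add_measure (i₁.smul_measure ENNReal.ofReal_ne_top)
      (i₂.smul_measure ENNReal.ofReal_ne_top), integral_smul_measure, integral_smul_measure,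
      ENNReal.toReal_ofReal ha, ENNReal.toReal_ofReal hb] at hle
    simp only [smul_eq_mul] at hle ⊢
    have q₁ := mul_le_mul_of_nonneg_left l₁.le ha
    have q₂ := mul_le_mul_of_nonneg_left l₂.le hb
    change _ ≤ a * (PlowEps μ c e₁ + δ) at q₁
    change _ ≤ b * (PlowEps μ c e₂ + δ) at q₂
    have q₃ : a * δ + b * δ = δ := by rw [← add_mul, hab, one_mul]
    linarith
  refine ⟨hanti, ?_, hconv⟩
  have hzero : ∀ δ > 0, ∃ n : ℕ, PlowEps μ c 0 - δ < PlowEps μ c (1 / ((n : ℝ) + 1)) := by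
    intro δ hδ
    by_contra! hcon
    have hpos : ∀ n : ℕ, (0 : ℝ) ≤ 1 / ((n : ℝ) + 1) := fun n => by positivity
    have hex : ∀ n : ℕ, ∃ p : ProbabilityMeasure (Path T d),
        (p : Measure (Path T d)) ∈ MartSetEps μ (1 / ((n : ℝ) + 1)) ∧
        ∫ x, c x ∂(p : Measure (Path T d)) ≤ PlowEps μ c 0 - δ / 2 := by
      intro n
      obtain ⟨_, ⟨π, h, i, rfl⟩, l⟩ := Real.lt_sInf_add_pos (hnee _ (hpos n)) (half_pos hδ)
      change _ < PlowEps μ c (1 / ((n : ℝ) + 1)) + δ / 2 at l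
      exact ⟨⟨π, h.1⟩, h, by have := hcon n; simp only [ProbabilityMeasure.coe_mk]; linarith⟩
    choose p hp hpc using hex
    obtain ⟨q, φ, hφ, hlim, hq⟩ := exists_subseq hmom (fun n => (hp n).2.1)
    have hq0 := limit_mem hmom hq hlim
      ((tendsto_one_div_add_atTop_nhds_zero_nat (𝕜 := ℝ)).comp hφ.tendsto_atTop) (fun n => hp (φ n))
    have h1 := integral_le_of_tendsto hmom (fun n => (hp (φ n)).2.1) hq hlim hlsc hK
      (fun n => hpc (φ n)) tendsto_const_nhds
    have h2 : PlowEps μ c 0 ≤ _ := csInf_le (hbdd 0) ⟨_, hq0, hint 0 _ hq0, rfl⟩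
    linarith
  intro e he
  rcases eq_or_lt_of_le (Set.mem_Ici.1 he) with rfl | hpos
  · rw [Metric.continuousWithinAt_iff]
    intro δ hδ
    obtain ⟨n, hn⟩ := hzero δ hδ
    refine ⟨1 / ((n : ℝ) + 1), by positivity, fun {x} hx hxd => ?_⟩
    have hx0 : 0 ≤ x := hx
    rw [Real.dist_eq, sub_zero, abs_of_nonneg hx0] at hxd
    have h1 := hanti (Set.mem_Ici.2 le_rfl) hx hx0
    have h2 := hanti hx (Set.mem_Ici.2 (by positivity : (0 : ℝ) ≤ 1 / ((n : ℝ) + 1))) hxd.le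
    simp only at h1 h2
    rw [Real.dist_eq, abs_lt]
    constructor <;> linarith
  · have h := (hconv.subset Set.Ioi_subset_Ici_self (convex_Ioi 0)).continuousOn isOpen_Ioi
    exact (h.continuousAt (Ioi_mem_nhds hpos)).continuousWithinAt

end MMOT
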